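/- arXiv:2010.11266 — 2 statements merged into one kernel-verified Lean document; each statement's English description precedes it below -/
import Mathlib

section
/- For any natural number K, weights r_1, ..., r_K ≥ 0, vectors β_1, ..., β_K in ℝ^d, and any threshold q ∈ ℝ, the sublevel set A_left = {x ∈ ℝ^d : f(x) ≤ q} is a convex subset of ℝ^d, where f(x) = 1 − exp(−∑_{i=1}^K r_i * log(1 + exp(⟨β_i, x⟩))). -/
open scoped RealInnerProductSpace

/-!
The softplus function `t ↦ log (1 + exp t)` has the increasing sigmoid as its derivative, so it is
convex and nondecreasing. A nonnegative combination of softplus functions of convex scores is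
therefore convex, and the voting probability is its image under the nondecreasing map
`t ↦ 1 - exp (-t)`: quasiconvex, though in general not convex.
-/

section Convex

variable {𝕜 E β : Type*} [Semiring 𝕜] [PartialOrder 𝕜] [AddCommMonoid E] [SMul 𝕜 E]
  [AddCommMonoid β] [PartialOrder β] {D : Set E}

theorem convexOn_finset_sum {ι : Type*} [IsOrderedAddMonoid β] [Module 𝕜 β] {s : Finset ι}
    {f : ι → E → β} (hD : Convex 𝕜 D) (hf : ∀ i ∈ s, ConvexOn 𝕜 D (f i)) :
    ConvexOn 𝕜 D (∑ i ∈ s, f i) :=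
  Finset.sum_induction f (ConvexOn 𝕜 D) (fun _ _ => ConvexOn.add) (convexOn_const 0 hD) hf

-- `ConvexOn.comp` needs the image of `D` under `f` to be convex, which can fail.
theorem convexOn_comp_of_monotone {α : Type*} [AddCommMonoid α] [PartialOrder α] [SMul 𝕜 α]
    [SMul 𝕜 β] {φ : α → β} {f : E → α} (hφ : ConvexOn 𝕜 Set.univ φ) (hφ_mono : Monotone φ)
    (hf : ConvexOn 𝕜 D f) : ConvexOn 𝕜 D fun x => φ (f x) :=
  ⟨hf.1, fun _ hx _ hy _ _ ha hb hab =>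
    (hφ_mono (hf.2 hx hy ha hb hab)).trans (hφ.2 trivial trivial ha hb hab)⟩

end Convex

theorem hasDerivAt_log_one_add_exp (t : ℝ) :
    HasDerivAt (fun t : ℝ => Real.log (1 + Real.exp t)) (Real.sigmoid t) t := by
  have hsigmoid : Real.exp t / (1 + Real.exp t) = Real.sigmoid t := by
    rw [Real.sigmoid_def, Real.exp_neg]
    field_simp
    ring
  rw [← hsigmoid]
  exact ((Real.hasDerivAt_exp t).const_add 1).log (by positivity)

theorem monotone_log_one_add_exp : Monotone fun t : ℝ => Real.log (1 + Real.exp t) :=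
  monotone_of_hasDerivAt_nonneg hasDerivAt_log_one_add_exp Real.sigmoid_nonneg

theorem convexOn_log_one_add_exp :
    ConvexOn ℝ Set.univ fun t : ℝ => Real.log (1 + Real.exp t) := by
  refine Monotone.convexOn_univ_of_deriv
    (fun t => (hasDerivAt_log_one_add_exp t).differentiableAt) ?_
  rw [deriv_eq hasDerivAt_log_one_add_exp]
  exact Real.sigmoid_monotone

section Committee

variable {E ι : Type*} [AddCommMonoid E] [Module ℝ E] {D : Set E} {s : Finset ι} {r : ι → ℝ}
  {g : ι → E → ℝ}

theorem convexOn_sum_mul_log_one_add_exp (hD : Convex ℝ D) (hr : ∀ i ∈ s, 0 ≤ r i)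
    (hg : ∀ i ∈ s, ConvexOn ℝ D (g i)) :
    ConvexOn ℝ D fun x => ∑ i ∈ s, r i * Real.log (1 + Real.exp (g i x)) := by
  have hsum := convexOn_finset_sum hD fun i hi =>
    (convexOn_comp_of_monotone convexOn_log_one_add_exp monotone_log_one_add_exp (hg i hi)).smul
      (hr i hi)
  simpa only [Finset.sum_fn, smul_eq_mul] using hsum

theorem convex_sublevel_committee_general (hD : Convex ℝ D) (hr : ∀ i ∈ s, 0 ≤ r i)
    (hg : ∀ i ∈ s, ConvexOn ℝ D (g i)) (q : ℝ) :
    Convex ℝ {x ∈ D |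
      1 - Real.exp (-(∑ i ∈ s, r i * Real.log (1 + Real.exp (g i x)))) ≤ q} := by
  have hmono : Monotone fun t : ℝ => 1 - Real.exp (-t) := fun _ _ hst =>
    sub_le_sub_left (Real.exp_le_exp.2 (neg_le_neg hst)) 1
  exact (convexOn_sum_mul_log_one_add_exp hD hr hg).quasiconvexOn.monotone_comp hmono q

end Committee

/-- Theorem 1 (convexity part): the sublevel set
`A_left = {x | f x ≤ q}` of the committee voting probability
`f(x) = 1 - exp (-∑ i, r i * log (1 + exp ⟪β i, x⟫))` is convex. -/
theorem convex_sublevel_committee (d K : ℕ) (r : Fin K → ℝ) (hr : ∀ i, 0 ≤ r i)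
    (β : Fin K → EuclideanSpace ℝ (Fin d)) (q : ℝ) :
    Convex ℝ {x : EuclideanSpace ℝ (Fin d) |
      1 - Real.exp (-(∑ i : Fin K, r i * Real.log (1 + Real.exp ⟪β i, x⟫))) ≤ q} := by
  simpa using convex_sublevel_committee_general convex_univ (s := Finset.univ) (fun i _ => hr i)
    (fun i _ => (innerₛₗ ℝ (β i)).convexOn convex_univ) q
end

section
/- Let K be a natural number, r_1, ..., r_K > 0, β_1, ..., β_K ∈ ℝ^d, and let q ∈ (0, 1) with q* = −log(1 − q) > 0. Define f(x) = 1 − exp(−∑_{i=1}^K r_i * log(1 + exp(⟨β_i, x⟩))). Then the sublevel set {x ∈ ℝ^d : f(x) ≤ q} is contained in the convex polytope ⋂_{i=1}^K {x ∈ ℝ^d : ⟨β_i, x⟩ ≤ log(exp(q*/r_i) − 1)}, i.e., for every x with f(x) ≤ q and every index i, ⟨β_i, x⟩ ≤ log(exp(q*/r_i) − 1). -/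
open scoped RealInnerProductSpace

/-!
Since `1 - f x = ∏ i, (1 + exp ⟪β i, x⟫) ^ (-r i)`, the value `f x` is the probability that at
least one of `K` independent experts votes yes. It is at least the probability that any given
expert does, so `f x ≤ q` bounds each of these by `q`; for a single expert such a bound is the
half-space condition.
-/

theorem one_sub_exp_neg_le_iff {s q : ℝ} (hq : q < 1) :
    1 - Real.exp (-s) ≤ q ↔ s ≤ -Real.log (1 - q) := by
  rw [sub_le_comm, ← Real.log_le_iff_le_exp (sub_pos.mpr hq), le_neg]

theorem log_one_add_exp_nonneg (t : ℝ) : 0 ≤ Real.log (1 + Real.exp t) :=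
  Real.log_nonneg (le_add_of_nonneg_right (Real.exp_nonneg t))

theorem le_log_exp_sub_one_of_log_one_add_exp_le {t c : ℝ}
    (h : Real.log (1 + Real.exp t) ≤ c) : t ≤ Real.log (Real.exp c - 1) := by
  have exp_le : Real.exp t ≤ Real.exp c - 1 :=
    le_sub_iff_add_le'.mpr ((Real.log_le_iff_le_exp (by positivity)).mp h)
  exact (Real.le_log_iff_exp_le ((Real.exp_pos t).trans_le exp_le)).mpr exp_le

theorem sublevel_subset_polytope_general {ι : Type*} {s : Finset ι} {r u : ι → ℝ} {q : ℝ}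
    (hr : ∀ j ∈ s, 0 ≤ r j) (hq : q < 1)
    (h : 1 - Real.exp (-∑ j ∈ s, r j * Real.log (1 + Real.exp (u j))) ≤ q)
    {i : ι} (hi : i ∈ s) (hri : 0 < r i) :
    u i ≤ Real.log (Real.exp (-Real.log (1 - q) / r i) - 1) := by
  have term_le : r i * Real.log (1 + Real.exp (u i)) ≤ -Real.log (1 - q) :=
    calc r i * Real.log (1 + Real.exp (u i))
      _ ≤ ∑ j ∈ s, r j * Real.log (1 + Real.exp (u j)) :=
        Finset.single_le_sum (f := fun j => r j * Real.log (1 + Real.exp (u j)))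
          (fun j hj => mul_nonneg (hr j hj) (log_one_add_exp_nonneg (u j))) hi
      _ ≤ -Real.log (1 - q) := (one_sub_exp_neg_le_iff hq).mp h
  exact le_log_exp_sub_one_of_log_one_add_exp_le ((le_div_iff₀' hri).mpr term_le)

/-- Theorem 1 (polytope-containment part): if `f x ≤ q` with
`f(x) = 1 - exp (-∑ i, r i * log (1 + exp ⟪β i, x⟫))`, `r i > 0` and `q ∈ (0,1)`,
then for every `i`, `⟪β i, x⟫ ≤ log (exp (q*/r i) - 1)` where `q* = -log (1-q)`. -/
theorem sublevel_subset_polytope (d K : ℕ) (r : Fin K → ℝ) (hr : ∀ i, 0 < r i)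
    (β : Fin K → EuclideanSpace ℝ (Fin d)) (q : ℝ) (hq0 : 0 < q) (hq1 : q < 1)
    (qs : ℝ) (hqs : qs = -Real.log (1 - q)) :
    ∀ x : EuclideanSpace ℝ (Fin d),
      1 - Real.exp (-(∑ i : Fin K, r i * Real.log (1 + Real.exp ⟪β i, x⟫))) ≤ q →
      ∀ i : Fin K, ⟪β i, x⟫ ≤ Real.log (Real.exp (qs / r i) - 1) := by
  subst hqs
  exact fun x hx i => sublevel_subset_polytope_general (u := fun j => ⟪β j, x⟫)
    (fun j _ => (hr j).le) hq1 hx (Finset.mem_univ i) (hr i)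
end
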